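/- arXiv:2403.05457 — 4 statements merged into one kernel-verified Lean document; each statement's English description precedes it below -/
import Mathlib

section
/- Let Γ = U C Uᵀ be a positive definite symmetric matrix in ℝ^{n×n} with U orthogonal and C diagonal with positive diagonal entries c_1,…,c_n. Define the matrix M ∈ ℝ^{(n(n+1)/2)×n²} by M_{ι₁(i,j), ι₂(ℓ,k)} = c_j U_{ℓ,i} U_{k,j} + c_i U_{ℓ,j} U_{k,i} if i ≠ j, and M_{ι₁(i,j), ι₂(ℓ,k)} = U_{ℓ,i} U_{k,j} if i = j, and the vector b ∈ ℝ^{n(n+1)/2} by b_{ι₁(i,j)} = 0 if i ≠ j and b_{ι₁(i,i)} = -1/(2c_i), where ι₁ enumerates pairs (i,j) with i ≤ j and ι₂ enumerates all pairs in [n]². Then for every v ∈ ℝ^{n²}, the matrix A = vec⁻¹(v) satisfies ΓAᵀ + AΓ = -I if and only if M v = b. -/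
open Matrix

/-- Given an orthonormal spectral decomposition `Γ = U C Uᵀ` of a positive
definite symmetric matrix (U orthogonal, C diagonal with positive diagonal entries),
and the matrix `M` and vector `b` built from `U` and the eigenvalues `cᵢ = C i i` via
the index bijections `ι₁` (upper triangle, `i ≤ j`) and `ι₂` (all pairs, used for the
vectorization), a matrix `A = vec⁻¹(v)` satisfies the Lyapunov equation
`Γ Aᵀ + A Γ = -I` if and only if `M v = b`. -/
theorem lyapunov_iff_linear_system (n : ℕ) (U C Γ : Matrix (Fin n) (Fin n) ℝ)
    (hU : U * Uᵀ = 1)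
    (hCdiag : ∀ i j : Fin n, i ≠ j → C i j = 0)
    (hCpos : ∀ i : Fin n, 0 < C i i)
    (hΓ : Γ = U * C * Uᵀ)
    (ι₁ : {p : Fin n × Fin n // p.1 ≤ p.2} ≃ Fin (n * (n + 1) / 2))
    (ι₂ : Fin n × Fin n ≃ Fin (n * n))
    (M : Matrix (Fin (n * (n + 1) / 2)) (Fin (n * n)) ℝ)
    (b : Fin (n * (n + 1) / 2) → ℝ)
    (hM : ∀ (i j : Fin n) (hij : i ≤ j) (ℓ k : Fin n),
      M (ι₁ ⟨(i, j), hij⟩) (ι₂ (ℓ, k)) =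
        if i = j then U ℓ i * U k j
        else C j j * U ℓ i * U k j + C i i * U ℓ j * U k i)
    (hb : ∀ (i j : Fin n) (hij : i ≤ j),
      b (ι₁ ⟨(i, j), hij⟩) = if i = j then -1 / (2 * C i i) else 0)
    (v : Fin (n * n) → ℝ) (A : Matrix (Fin n) (Fin n) ℝ)
    (hA : ∀ ℓ k : Fin n, A ℓ k = v (ι₂ (ℓ, k))) :
    Γ * Aᵀ + A * Γ = -1 ↔ M.mulVec v = b := by
  have hU' : Uᵀ * U = 1 := mul_eq_one_comm.mp hU
  have hC : C = Matrix.diagonal (fun i => C i i) := by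
    ext i j
    by_cases h : i = j
    · subst h; simp
    · rw [hCdiag i j h, Matrix.diagonal_apply_ne _ h]
  obtain ⟨B, hB⟩ : ∃ B, B = Uᵀ * A * U := ⟨_, rfl⟩
  have hBe : ∀ i j, B i j = ∑ ℓ, ∑ k, U ℓ i * U k j * A ℓ k := by
    intro i j
    rw [hB, Matrix.mul_apply]
    simp only [Matrix.mul_apply, Matrix.transpose_apply, Finset.sum_mul]
    rw [Finset.sum_comm]
    refine Finset.sum_congr rfl fun ℓ _ => Finset.sum_congr rfl fun k _ => ?_
    ring
  have hAB : A = U * B * Uᵀ := by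
    calc A = (U * Uᵀ) * A * (U * Uᵀ) := by rw [hU]; simp
      _ = U * B * Uᵀ := by rw [hB]; simp only [Matrix.mul_assoc]
  have hL : Γ * Aᵀ + A * Γ = U * (C * Bᵀ + B * C) * Uᵀ := by
    have h1 : Γ * Aᵀ = U * C * (Uᵀ * U) * Bᵀ * Uᵀ := by
      rw [hΓ, hAB]
      simp only [Matrix.transpose_mul, Matrix.transpose_transpose, Matrix.mul_assoc]
    have h2 : A * Γ = U * B * (Uᵀ * U) * C * Uᵀ := by
      rw [hΓ, hAB]
      simp only [Matrix.mul_assoc]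
    rw [h1, h2, hU']
    simp only [Matrix.mul_one, Matrix.mul_add, Matrix.add_mul, Matrix.mul_assoc]
  have hiff : Γ * Aᵀ + A * Γ = -1 ↔ C * Bᵀ + B * C = -1 := by
    rw [hL]
    constructor
    · intro h
      calc C * Bᵀ + B * C = (Uᵀ * U) * (C * Bᵀ + B * C) * (Uᵀ * U) := by rw [hU']; simp
        _ = Uᵀ * (U * (C * Bᵀ + B * C) * Uᵀ) * U := by simp only [Matrix.mul_assoc]
        _ = -1 := by rw [h]; simp [hU']
    · intro h
      rw [h]; simp [hU]
  have hent : ∀ i j, (C * Bᵀ + B * C) i j = C i i * B j i + C j j * B i j := by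
    intro i j
    rw [hC]
    simp [Matrix.diagonal_mul, Matrix.mul_diagonal, mul_comm]
  have hMv : ∀ (i j : Fin n) (hij : i ≤ j), M.mulVec v (ι₁ ⟨(i, j), hij⟩) =
      if i = j then B i j else C j j * B i j + C i i * B j i := by
    intro i j hij
    rw [Matrix.mulVec, dotProduct, ← ι₂.sum_comp, Fintype.sum_prod_type]
    simp only [hM, ← hA]
    split_ifs with h
    · rw [hBe]
    · rw [hBe i j, hBe j i]
      simp only [Finset.mul_sum, ← Finset.sum_add_distrib]
      refine Finset.sum_congr rfl fun ℓ _ => Finset.sum_congr rfl fun k _ => ?_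
      ring
  rw [hiff]
  constructor
  · intro h
    funext x
    obtain ⟨⟨⟨i, j⟩, hij⟩, rfl⟩ := ι₁.surjective x
    rw [hMv, hb]
    have he := hent i j
    rw [h] at he
    split_ifs with hh
    · subst hh
      have := hCpos i
      simp at he
      field_simp
      linarith
    · simp [Matrix.one_apply_ne hh] at he
      linarith
  · intro h
    have key : ∀ i j : Fin n, i ≤ j →
        C i i * B j i + C j j * B i j = (-1 : Matrix (Fin n) (Fin n) ℝ) i j := by
      intro i j hij
      have h1 := congrFun h (ι₁ ⟨(i, j), hij⟩)
      rw [hMv, hb] at h1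
      split_ifs at h1 with hh
      · subst hh
        have := hCpos i
        rw [h1]
        simp
        field_simp
        norm_num
      · simp [Matrix.one_apply_ne hh]
        linarith
    ext i j
    rw [hent]
    rcases le_total i j with hij | hij
    · exact key i j hij
    · have := key j i hij
      rw [add_comm, this]
      simp [Matrix.one_apply, eq_comm]
end

section
/- Let Γ ∈ ℝ^{n×n} be positive definite symmetric. The set S_Γ = {A ∈ ℝ^{n×n} : ΓAᵀ + AΓ = -I} is a nonempty affine subspace of ℝ^{n×n} whose direction (the linear subspace {A ∈ ℝ^{n×n} : ΓAᵀ + AΓ = 0}) has dimension n(n-1)/2. -/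
open Matrix

/-- The linear map `A ↦ Γ Aᵀ + A Γ`. -/
noncomputable def lyapMap (n : ℕ) (Γ : Matrix (Fin n) (Fin n) ℝ) :
    Matrix (Fin n) (Fin n) ℝ →ₗ[ℝ] Matrix (Fin n) (Fin n) ℝ where
  toFun A := Γ * Aᵀ + A * Γ
  map_add' A B := by
    rw [transpose_add, Matrix.mul_add, Matrix.add_mul]; abel
  map_smul' c A := by
    simp [transpose_smul]

/-- The skew-symmetric matrix with prescribed strict lower triangle. -/
def skewOf (n : ℕ) (f : (Σ j : Fin n, Fin (j : ℕ)) → ℝ) : Matrix (Fin n) (Fin n) ℝ :=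
  Matrix.of fun i j =>
    if h : (i : ℕ) < j then -f ⟨j, ⟨i, h⟩⟩ else if h : (j : ℕ) < i then f ⟨i, ⟨j, h⟩⟩ else 0

theorem skewOf_transpose (n : ℕ) (f : (Σ j : Fin n, Fin (j : ℕ)) → ℝ) :
    (skewOf n f)ᵀ + skewOf n f = 0 := by
  ext i j
  simp only [skewOf, Matrix.add_apply, Matrix.transpose_apply, Matrix.of_apply, Matrix.zero_apply]
  rcases lt_trichotomy (i : ℕ) (j : ℕ) with h | h | h
  · simp [h, h.not_gt]
  · simp [h]
  · simp [h, h.not_gt]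

/-- The kernel is identified with the strict lower triangles of `A Γ`. -/
noncomputable def lyapEquiv (n : ℕ) (Γ : Matrix (Fin n) (Fin n) ℝ) (hs : Γᵀ = Γ)
    (hu : IsUnit Γ.det) :
    LinearMap.ker (lyapMap n Γ) ≃ₗ[ℝ] ((Σ j : Fin n, Fin (j : ℕ)) → ℝ) where
  toFun A p := (A.1 * Γ) p.1 (Fin.castLE p.1.2.le p.2)
  map_add' A B := by ext p; simp [Matrix.add_mul]
  map_smul' c A := by ext p; simp
  invFun f := ⟨skewOf n f * Γ⁻¹, by
    rw [LinearMap.mem_ker]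
    change Γ * (skewOf n f * Γ⁻¹)ᵀ + skewOf n f * Γ⁻¹ * Γ = 0
    rw [transpose_mul, transpose_nonsing_inv, hs, Matrix.mul_nonsing_inv_cancel_left _ _ hu,
      Matrix.nonsing_inv_mul_cancel_right _ _ hu, skewOf_transpose]⟩
  left_inv A := by
    apply Subtype.ext
    have hA : Γ * A.1ᵀ + A.1 * Γ = 0 := LinearMap.mem_ker.1 A.2
    have hsk : (A.1 * Γ)ᵀ + A.1 * Γ = 0 := by rw [transpose_mul, hs, hA]
    change skewOf n _ * Γ⁻¹ = A.1
    have key : skewOf n (fun p => (A.1 * Γ) p.1 (Fin.castLE p.1.2.le p.2)) = A.1 * Γ := by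
      generalize A.1 * Γ = B at hsk
      ext i j
      have hij := congrFun (congrFun hsk i) j
      simp only [Matrix.add_apply, Matrix.transpose_apply, Matrix.zero_apply] at hij
      simp only [skewOf, Matrix.of_apply]
      rcases lt_trichotomy (i : ℕ) (j : ℕ) with h | h | h
      · have : Fin.castLE j.2.le ⟨(i : ℕ), h⟩ = i := rfl
        simp only [h, dite_true, this]; linarith
      · have h' : i = j := Fin.ext h
        subst h'
        simp; linarith
      · have : Fin.castLE i.2.le ⟨(j : ℕ), h⟩ = j := rfl
        simp only [h, h.not_gt, dite_true, dite_false, this]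
    rw [key, Matrix.mul_nonsing_inv_cancel_right _ _ hu]
  right_inv f := by
    funext p
    obtain ⟨j, i⟩ := p
    change (skewOf n f * Γ⁻¹ * Γ) j (Fin.castLE j.2.le i) = f ⟨j, i⟩
    rw [Matrix.nonsing_inv_mul_cancel_right _ _ hu]
    have h : (i : ℕ) < j := i.2
    have h1 : ((Fin.castLE j.2.le i : Fin n) : ℕ) < j := h
    simp only [skewOf, Matrix.of_apply]
    rw [dif_neg h1.not_gt, dif_pos h1]
    rfl

/-- For a positive definite symmetric `Γ`, the solution set
`S_Γ = {A : Γ Aᵀ + A Γ = -I}` is a nonempty affine subspace of `ℝ^{n×n}` whose direction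
is the linear subspace `{A : Γ Aᵀ + A Γ = 0}`, of dimension `n(n-1)/2`. -/
theorem lyapunov_solution_set_affine (n : ℕ) (Γ : Matrix (Fin n) (Fin n) ℝ)
    (hΓ : Γ.PosDef) :
    ∃ S : AffineSubspace ℝ (Matrix (Fin n) (Fin n) ℝ),
      (S : Set (Matrix (Fin n) (Fin n) ℝ)) = {A | Γ * Aᵀ + A * Γ = -1} ∧
      (S : Set (Matrix (Fin n) (Fin n) ℝ)).Nonempty ∧
      (S.direction : Set (Matrix (Fin n) (Fin n) ℝ)) = {A | Γ * Aᵀ + A * Γ = 0} ∧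
      Module.finrank ℝ S.direction = n * (n - 1) / 2 := by
  have hs : Γᵀ = Γ := by
    have h := hΓ.isHermitian
    rwa [Matrix.IsHermitian, conjTranspose_eq_transpose_of_trivial] at h
  have hu : IsUnit Γ.det := hΓ.det_pos.ne'.isUnit
  set A₀ : Matrix (Fin n) (Fin n) ℝ := (-(1 / 2) : ℝ) • Γ⁻¹ with hA₀
  have h0 : lyapMap n Γ A₀ = -1 := by
    change Γ * A₀ᵀ + A₀ * Γ = -1
    rw [hA₀, transpose_smul, transpose_nonsing_inv, hs, Matrix.mul_smul, Matrix.smul_mul,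
      Matrix.mul_nonsing_inv _ hu, Matrix.nonsing_inv_mul _ hu, ← add_smul]
    norm_num
  refine ⟨AffineSubspace.mk' A₀ (LinearMap.ker (lyapMap n Γ)), ?_, ⟨A₀, ?_⟩, ?_, ?_⟩
  · ext A
    rw [SetLike.mem_coe, AffineSubspace.mem_mk', LinearMap.mem_ker, vsub_eq_sub, map_sub, h0,
      sub_eq_zero]
    rfl
  · exact AffineSubspace.self_mem_mk' _ _
  · rw [AffineSubspace.direction_mk']
    rfl
  · rw [AffineSubspace.direction_mk', (lyapEquiv n Γ hs hu).finrank_eq,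
      Module.finrank_fintype_fun_eq_card, Fintype.card_sigma]
    simp only [Fintype.card_fin]
    rw [Fin.sum_univ_eq_sum_range (fun i => i), Finset.sum_range_id]
end

section
/- Let A ∈ ℝ^{n×n} be Hurwitz, i.e., every eigenvalue of A (as a complex matrix) has strictly negative real part. Then the Kronecker sum I ⊗ A + A ⊗ I ∈ ℝ^{n²×n²} is invertible. -/
open Matrix Kronecker

/-- If `A` is Hurwitz (all roots of its characteristic polynomial over `ℂ`
have strictly negative real part), then the Kronecker sum `I ⊗ A + A ⊗ I` is invertible. -/
theorem kronecker_sum_invertible_of_hurwitz (n : ℕ) (A : Matrix (Fin n) (Fin n) ℝ)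
    (hA : ∀ z : ℂ, (A.map (Complex.ofReal)).charpoly.IsRoot z → z.re < 0) :
    IsUnit ((1 : Matrix (Fin n) (Fin n) ℝ) ⊗ₖ A + A ⊗ₖ (1 : Matrix (Fin n) (Fin n) ℝ)) := by
  have hA' : ∀ z : ℂ, Polynomial.aeval z A.charpoly = 0 → z.re < 0 := by
    intro z hz
    apply hA z
    have := Matrix.charpoly_map A Complex.ofRealHom
    change (A.map Complex.ofRealHom).charpoly.IsRoot z
    rw [this, Polynomial.IsRoot, Polynomial.eval_map]
    exact hz
  have hcop : IsCoprime A.charpoly (A.charpoly.comp (-Polynomial.X)) := by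
    rw [Polynomial.isCoprime_iff_aeval_ne_zero_of_isAlgClosed ℝ ℂ]
    intro z
    by_contra! h
    have h1 := hA' z h.1
    have h2 := hA' (-z) (by simpa [Polynomial.aeval_comp] using h.2)
    simp at h2
    linarith
  obtain ⟨u, v, huv⟩ := hcop
  have hq : Polynomial.aeval (-Aᵀ) (A.charpoly.comp (-Polynomial.X)) = 0 := by
    rw [Polynomial.aeval_comp]
    simp only [map_neg, Polynomial.aeval_X, neg_neg]
    rw [← Matrix.charpoly_transpose]
    exact Matrix.aeval_self_charpoly _
  have hinv : Polynomial.aeval (-Aᵀ) A.charpoly * Polynomial.aeval (-Aᵀ) u = 1 := by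
    have := congrArg (Polynomial.aeval (-Aᵀ)) huv
    rw [map_add, map_mul, map_mul, hq, mul_zero, add_zero, map_one] at this
    rw [← this, ← map_mul, ← map_mul, mul_comm]
  rw [← Matrix.mulVec_injective_iff_isUnit]
  refine (injective_iff_map_eq_zero (Matrix.mulVecLin
    ((1 : Matrix (Fin n) (Fin n) ℝ) ⊗ₖ A + A ⊗ₖ (1 : Matrix (Fin n) (Fin n) ℝ)))).2 ?_
  intro w hw
  obtain ⟨X, rfl⟩ := (Matrix.vec_bijective (R := ℝ) (m := Fin n) (n := Fin n)).2 w
  rw [Matrix.mulVecLin_apply, Matrix.add_mulVec, Matrix.kronecker_mulVec_vec,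
    Matrix.kronecker_mulVec_vec, ← Matrix.vec_add, Matrix.vec_eq_zero_iff,
    Matrix.transpose_one, Matrix.mul_one, Matrix.one_mul] at hw
  rw [Matrix.vec_eq_zero_iff]
  have hs : SemiconjBy X (-Aᵀ) A := by
    change X * (-Aᵀ) = A * X
    rw [mul_neg]
    exact (eq_neg_of_add_eq_zero_left hw).symm
  have hp : ∀ p : Polynomial ℝ,
      X * Polynomial.aeval (-Aᵀ) p = Polynomial.aeval A p * X := by
    intro p
    induction p using Polynomial.induction_on' with
    | add p q hp hq => rw [map_add, map_add, mul_add, add_mul, hp, hq]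
    | monomial k a =>
      rw [Polynomial.aeval_monomial, Polynomial.aeval_monomial, ← Algebra.smul_def,
        ← Algebra.smul_def, mul_smul_comm, smul_mul_assoc, (hs.pow_right k).eq]
  have h0 := hp A.charpoly
  rw [Matrix.aeval_self_charpoly, zero_mul] at h0
  rw [← mul_one X, ← hinv, ← mul_assoc, h0, zero_mul]
end

section
/- Let Γ ∈ ℝ^{n×n} be positive definite symmetric and let E ⊆ [n]×[n] be a set of directed edges. Suppose A₀ ∈ ℝ^{n×n} satisfies ΓA₀ᵀ + A₀Γ = -I and (A₀)_{i,j} = 0 for all (i,j) ∉ E, and suppose that the only skew-symmetric matrix K ∈ ℝ^{n×n} with (KΓ⁻¹)_{i,j} = 0 for all (i,j) ∉ E is K = 0. Then A₀ is the unique matrix A ∈ ℝ^{n×n} satisfying both ΓAᵀ + AΓ = -I and A_{i,j} = 0 for all (i,j) ∉ E; that is, exact knowledge of the edge set E recovers the state matrix exactly from the covariance Lyapunov equation. -/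
open Matrix

/-- Let `Γ` be positive definite symmetric and `E` a set of directed edges.
If `A₀` solves the covariance Lyapunov equation with support in `E`, and the only
skew-symmetric `K` with `(K Γ⁻¹)` supported in `E` is `K = 0`, then `A₀` is the unique
solution of the Lyapunov equation supported in `E`. -/
theorem unique_solution_with_edge_support (n : ℕ) (Γ : Matrix (Fin n) (Fin n) ℝ)
    (hΓ : Γ.PosDef) (E : Set (Fin n × Fin n)) (A₀ : Matrix (Fin n) (Fin n) ℝ)
    (hA₀ : Γ * A₀ᵀ + A₀ * Γ = -1)
    (hA₀supp : ∀ p : Fin n × Fin n, p ∉ E → A₀ p.1 p.2 = 0)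
    (hK : ∀ K : Matrix (Fin n) (Fin n) ℝ, Kᵀ = -K →
      (∀ p : Fin n × Fin n, p ∉ E → (K * Γ⁻¹) p.1 p.2 = 0) → K = 0) :
    ∀ A : Matrix (Fin n) (Fin n) ℝ, Γ * Aᵀ + A * Γ = -1 →
      (∀ p : Fin n × Fin n, p ∉ E → A p.1 p.2 = 0) → A = A₀ := by
  intro A hA hAs
  have hT : Γᵀ = Γ := by
    have h := hΓ.isHermitian.eq
    rwa [Matrix.conjTranspose_eq_transpose_of_trivial] at h
  have hu : IsUnit Γ.det := (Matrix.isUnit_iff_isUnit_det Γ).mp hΓ.isUnit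
  have hc : (A - A₀) * Γ * Γ⁻¹ = A - A₀ := Matrix.mul_nonsing_inv_cancel_right _ _ hu
  have h0 : (A - A₀) * Γ = 0 := by
    apply hK
    · have e := hA.trans hA₀.symm
      rw [Matrix.transpose_mul, Matrix.transpose_sub, hT, Matrix.mul_sub, Matrix.sub_mul]
      rw [← sub_eq_zero] at e ⊢
      rw [← e]
      abel
    · intro p hp
      rw [hc, Matrix.sub_apply, hAs p hp, hA₀supp p hp, sub_zero]
  rw [h0, Matrix.zero_mul] at hc
  exact sub_eq_zero.mp hc.symm
end
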